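/- Let γ > 0, δ > 0 and let u : [0, δ] → ℂ be a C^∞ function such that u^(m)(δ) = 0 for every integer m ≥ 0. Define J_n = ∫₀^δ θ^{γ} u(θ) e^{i n θ} dθ. Then for every natural number M ≥ 1 there exists a constant C > 0 such that for all integers n ≥ 1, | e^{−iγπ/2} · conj(J_n) + e^{iγπ/2} · J_n − 2 Σ_{m=1}^{M} (Γ(γ+m)/(m−1)!) · Re{ u^(m−1)(0) · e^{iπ(2γ+m)/2} } · n^{−γ−m} | ≤ C · n^{−γ−M−1}. (Equivalently, 2 Re{ e^{iγπ/2} J_n } admits the asymptotic expansion 2 Σ_{m≥1} (Γ(γ+m)/(m−1)!) Re{ u^(m−1)(0) e^{iπ(2γ+m)/2} } n^{−γ−m} as n → ∞.) -/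

import Mathlib

/-!
Write `f w = w ^ γ * exp (i x w)`. On the positive axis `f` has the iterated antiderivatives
`F (k + 1) θ = (-i) ^ (k + 1) * ∫₀^∞ (y ^ k / k!) * f (θ + i y) dy`: these converge because `f`
decays in the upper half-plane, and `∂/∂θ` acts on `f (θ + i y)` as `-i ∂/∂y`, so that integrating
by parts in `y` lowers `k`. At `θ = 0` the ray is the imaginary axis and the integral is a Gamma
integral, of size `x ^ (-γ - k - 1)`.

Repeated integration by parts of `∫₀^δ u f` against these antiderivatives therefore produces the
terms of the expansion from the endpoint `0`, nothing from the endpoint `δ`, and an error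
`∫₀^δ u^(K) (F K)`. For `γ > 0` the uniform bound `F K = O(x ^ (-K) + x ^ (-γ - K))` on `[0, δ]` is
larger than the next term of the expansion, so one integrates by parts more often than there are
terms to be kept.
-/

open Set MeasureTheory Filter Topology Asymptotics
open scoped Interval

theorem integral_mul_eq_sum_add_integral_of_hasDerivAt {A : Type*} [NormedRing A]
    [NormedAlgebra ℝ A] [CompleteSpace A] {a b : ℝ} {g F : ℕ → ℝ → A} (K : ℕ)
    (hg : ∀ k ≤ K, ContinuousOn (g k) [[a, b]])
    (hF₀ : IntervalIntegrable (F 0) volume a b)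
    (hF : ∀ k < K, ContinuousOn (F (k + 1)) [[a, b]])
    (hg' : ∀ k < K, ∀ t ∈ Ioo (min a b) (max a b), HasDerivAt (g k) (g (k + 1) t) t)
    (hF' : ∀ k < K, ∀ t ∈ Ioo (min a b) (max a b), HasDerivAt (F (k + 1)) (F k t) t) :
    ∫ t in a..b, g 0 t * F 0 t =
      ∑ k ∈ Finset.range K, (-1) ^ k * (g k b * F (k + 1) b - g k a * F (k + 1) a) +
        (-1) ^ K * ∫ t in a..b, g K t * F K t := by
  induction K with
  | zero => simp
  | succ K ih =>
    have hFK : IntervalIntegrable (F K) volume a b := by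
      cases K with
      | zero => exact hF₀
      | succ K => exact (hF K (by lia)).intervalIntegrable
    have hparts := intervalIntegral.integral_mul_deriv_eq_deriv_mul_of_hasDerivAt (hg K (by lia))
      (hF K (by lia)) (hg' K (by lia)) (hF' K (by lia))
      (hg (K + 1) le_rfl).intervalIntegrable hFK
    rw [ih (fun k hk ↦ hg k (by lia)) (fun k hk ↦ hF k (by lia)) (fun k hk ↦ hg' k (by lia))
      (fun k hk ↦ hF' k (by lia)), hparts, Finset.sum_range_succ, pow_succ]
    noncomm_ring

theorem integral_Ioi_deriv_eq_neg_of_integrableOn {E : Type*} [NormedAddCommGroup E]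
    [NormedSpace ℝ E] [CompleteSpace E] {f f' : ℝ → E} {a : ℝ}
    (hderiv : ∀ t ∈ Ici a, HasDerivAt f (f' t) t) (hf : IntegrableOn f (Ioi a))
    (hf' : IntegrableOn f' (Ioi a)) :
    ∫ t in Ioi a, f' t = -f a := by
  have hlim : Tendsto f atTop (𝓝 0) := tendsto_zero_of_hasDerivAt_of_integrableOn_Ioi
    (fun t ht ↦ hderiv t (Ioi_subset_Ici_self ht)) hf' hf
  rw [integral_Ioi_of_hasDerivAt_of_tendsto' hderiv hf' hlim, zero_sub]

theorem integrableOn_rpow_mul_exp_neg_mul_Ioi {s x : ℝ} (hs : -1 < s) (hx : 0 < x) :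
    IntegrableOn (fun y : ℝ ↦ y ^ s * Real.exp (-(x * y))) (Ioi 0) := by
  simpa using integrableOn_rpow_mul_exp_neg_mul_rpow hs one_pos hx

theorem integral_rpow_mul_exp_neg_mul_Ioi_eq_Gamma {s x : ℝ} (hs : -1 < s) (hx : 0 < x) :
    ∫ y in Ioi (0 : ℝ), y ^ s * Real.exp (-(x * y)) = Real.Gamma (s + 1) * x ^ (-s - 1) := by
  have h := Real.integral_rpow_mul_exp_neg_mul_Ioi (by linarith : 0 < s + 1) hx
  rw [add_sub_cancel_right] at h
  rw [h, one_div, Real.inv_rpow hx.le, ← Real.rpow_neg hx.le, mul_comm]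
  congr 2
  ring

theorem hasDerivAt_iteratedDerivWithin_Icc {E : Type*} [NormedAddCommGroup E] [NormedSpace ℝ E]
    {f : ℝ → E} {a b : ℝ} {K k : ℕ} (hf : ContDiffOn ℝ K f (Icc a b)) (hk : k < K) {t : ℝ}
    (ht : t ∈ Ioo a b) :
    HasDerivAt (iteratedDerivWithin k f (Icc a b))
      (iteratedDerivWithin (k + 1) f (Icc a b) t) t := by
  have hab : a < b := ht.1.trans ht.2
  have hdiff := hf.differentiableOn_iteratedDerivWithin (m := k) (by exact_mod_cast hk)
    (uniqueDiffOn_Icc hab) t (Ioo_subset_Icc_self ht)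
  rw [iteratedDerivWithin_succ]
  exact hdiff.hasDerivWithinAt.hasDerivAt (Icc_mem_nhds ht.1 ht.2)

theorem isBigO_const_mul_rpow_of_le (c : ℂ) {p q : ℝ} (hpq : p ≤ q) :
    (fun x : ℝ ↦ c * (x ^ p : ℝ)) =O[𝓟 (Ici 1)] fun x ↦ x ^ q := by
  refine isBigO_principal.2 ⟨‖c‖, fun x hx ↦ ?_⟩
  have hx₀ : (0 : ℝ) ≤ x := zero_le_one.trans hx
  rw [norm_mul, Complex.norm_real, Real.norm_of_nonneg (Real.rpow_nonneg hx₀ p),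
    Real.norm_of_nonneg (Real.rpow_nonneg hx₀ q)]
  gcongr

theorem ofReal_mul_cpow {r : ℝ} (hr : 0 < r) {z : ℂ} (hz : z ≠ 0) (s : ℂ) :
    (r * z) ^ s = (r : ℂ) ^ s * z ^ s := by
  have hr' : (r : ℂ) ≠ 0 := by exact_mod_cast hr.ne'
  rw [Complex.cpow_def_of_ne_zero (mul_ne_zero hr' hz), Complex.cpow_def_of_ne_zero hr',
    Complex.cpow_def_of_ne_zero hz, Complex.log_ofReal_mul hr hz, Complex.ofReal_log hr.le,
    ← Complex.exp_add, add_mul]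

theorem exp_neg_mul_conj_add_exp_mul (φ : ℝ) (z : ℂ) :
    Complex.exp (-(Complex.I * φ)) * (starRingEnd ℂ) z + Complex.exp (Complex.I * φ) * z =
      2 * ((Complex.exp (Complex.I * φ) * z).re : ℂ) := by
  have hconj : Complex.exp (-(Complex.I * φ)) = (starRingEnd ℂ) (Complex.exp (Complex.I * φ)) := by
    simp [← Complex.exp_conj]
  rw [hconj, ← map_mul, add_comm, Complex.add_conj]
  push_cast
  rfl

theorem exists_norm_rpow_le_one_add_im_rpow (γ B : ℝ) :
    ∃ C, ∀ w : ℂ, w.re ∈ Icc 0 B → 0 < w.im → ‖w‖ ^ γ ≤ C * (1 + w.im ^ γ) := by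
  rcases le_total γ 0 with hγ | hγ
  · refine ⟨1, fun w _ hw ↦ ?_⟩
    have h := Real.rpow_le_rpow_of_nonpos hw ((le_abs_self _).trans (Complex.abs_im_le_norm w)) hγ
    linarith
  · refine ⟨(|B| + 1) ^ γ, fun w hre hw ↦ ?_⟩
    have hnorm : ‖w‖ ≤ (|B| + 1) * max 1 w.im := by
      have h := Complex.norm_le_abs_re_add_abs_im w
      rw [abs_of_nonneg hre.1, abs_of_pos hw] at h
      nlinarith [le_abs_self B, hre.2, le_max_left 1 w.im, le_max_right 1 w.im, abs_nonneg B]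
    have hmax : max 1 w.im ^ γ ≤ 1 + w.im ^ γ := by
      have := Real.rpow_pos_of_pos hw γ
      rcases max_choice 1 w.im with h | h <;> simp [h, this.le]
    calc ‖w‖ ^ γ ≤ ((|B| + 1) * max 1 w.im) ^ γ := by gcongr
      _ = (|B| + 1) ^ γ * max 1 w.im ^ γ := Real.mul_rpow (by positivity) (by positivity)
      _ ≤ _ := by gcongr

/-- The function `w ↦ w ^ γ * exp (i x w)`, the continuation to complex `w` of the oscillatory
weight `θ ^ γ * exp (i x θ)`. -/
noncomputable def oscKernel (γ x : ℝ) (w : ℂ) : ℂ :=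
  w ^ (γ : ℂ) * Complex.exp (Complex.I * x * w)

/-- The logarithmic derivative of `oscKernel γ x`, by which differentiation in either variable of
`rayIntegrand` multiplies the kernel. -/
noncomputable def oscLogDeriv (γ x : ℝ) (w : ℂ) : ℂ :=
  γ / w + Complex.I * x

theorem norm_oscKernel (γ x : ℝ) (w : ℂ) :
    ‖oscKernel γ x w‖ = ‖w‖ ^ γ * Real.exp (-(x * w.im)) := by
  simp [oscKernel, Complex.norm_cpow_real, Complex.norm_exp]

theorem hasDerivAt_oscKernel (γ x : ℝ) {w : ℂ} (hw : w ∈ Complex.slitPlane) :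
    HasDerivAt (oscKernel γ x) (oscLogDeriv γ x w * oscKernel γ x w) w := by
  have hpow := (hasDerivAt_id w).cpow_const (c := (γ : ℂ)) hw
  have hexp := ((hasDerivAt_id w).const_mul (Complex.I * x)).cexp
  refine (hpow.mul hexp).congr_deriv ?_
  simp only [id, mul_one, oscKernel, oscLogDeriv,
    Complex.cpow_sub _ _ (Complex.slitPlane_ne_zero hw), Complex.cpow_one]
  ring

theorem norm_oscLogDeriv_le (γ x : ℝ) {a : ℝ} {w : ℂ} (ha : 0 < a) (hw : a ≤ w.re) :
    ‖oscLogDeriv γ x w‖ ≤ |γ| / a + |x| := by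
  have hnorm : a ≤ ‖w‖ := hw.trans (Complex.re_le_norm w)
  refine (norm_add_le _ _).trans ?_
  simp only [norm_div, norm_mul, Complex.norm_real, Complex.norm_I, one_mul, Real.norm_eq_abs]
  gcongr

theorem hasDerivAt_oscKernel_vertical (γ x : ℝ) {θ : ℝ} (hθ : 0 < θ) (y : ℝ) :
    HasDerivAt (fun t : ℝ ↦ oscKernel γ x (θ + t * Complex.I))
      (Complex.I * (oscLogDeriv γ x (θ + y * Complex.I) *
        oscKernel γ x (θ + y * Complex.I))) y := by
  have hslit : (θ + y * Complex.I : ℂ) ∈ Complex.slitPlane := Or.inl (by simpa using hθ)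
  have hline : HasDerivAt (fun t : ℝ ↦ (θ + t * Complex.I : ℂ)) (1 * Complex.I) y :=
    (Complex.ofRealCLM.hasDerivAt.mul_const _).const_add _
  refine ((hasDerivAt_oscKernel γ x hslit).comp_of_eq y hline rfl).congr_deriv ?_
  ring

theorem intervalIntegrable_oscKernel {γ : ℝ} (hγ : -1 < γ) (x a b : ℝ) :
    IntervalIntegrable (fun θ : ℝ ↦ oscKernel γ x θ) volume a b :=
  (intervalIntegral.intervalIntegrable_cpow' (by simpa using hγ)).mul_continuousOn
    (by fun_prop : Continuous fun θ : ℝ ↦ Complex.exp (Complex.I * x * θ)).continuousOn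

theorem ofReal_rpow_mul_mul_exp_eq_mul_oscKernel (γ x : ℝ) (z : ℂ) {θ : ℝ} (hθ : 0 ≤ θ) :
    (θ ^ γ : ℝ) * z * Complex.exp (Complex.I * x * θ) = z * oscKernel γ x θ := by
  rw [oscKernel, Complex.ofReal_cpow hθ]
  ring

/-- The integrand `(y ^ k / k!) * oscKernel γ x (θ + i y)`, whose integral over the vertical ray
`0 < y` is `rayMoment`. -/
noncomputable def rayIntegrand (γ x : ℝ) (k : ℕ) (θ y : ℝ) : ℂ :=
  (y : ℂ) ^ k / k.factorial * oscKernel γ x (θ + y * Complex.I)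

/-- The `k`-th normalized moment of `oscKernel γ x` along the vertical ray starting at `θ`. -/
noncomputable def rayMoment (γ x : ℝ) (k : ℕ) (θ : ℝ) : ℂ :=
  ∫ y in Ioi (0 : ℝ), rayIntegrand γ x k θ y

/-- The `k`-fold iterated antiderivative of `oscKernel γ x` on the positive axis that decays in the
upper half-plane. By Cauchy's formula for iterated integrals, taken along the vertical ray from
`θ` to `θ + i ∞`, it is a multiple of a ray moment. -/
noncomputable def rayAntideriv (γ x : ℝ) : ℕ → ℝ → ℂ
  | 0, θ => oscKernel γ x θ
  | k + 1, θ => (-Complex.I) ^ (k + 1) * rayMoment γ x k θ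

/-- A dominating function for `rayIntegrand γ x k θ`, up to a constant that is uniform for `θ` in
a bounded interval. -/
noncomputable def rayEnvelope (γ x : ℝ) (k : ℕ) (y : ℝ) : ℝ :=
  (y ^ (k : ℝ) + y ^ (γ + k)) * Real.exp (-(x * y))

section Ray

variable {γ x : ℝ}

theorem integrableOn_rayEnvelope (hγ : -1 < γ) (hx : 0 < x) (k : ℕ) :
    IntegrableOn (rayEnvelope γ x k) (Ioi 0) := by
  have := k.cast_nonneg (α := ℝ)
  unfold rayEnvelope
  simp only [add_mul]
  exact (integrableOn_rpow_mul_exp_neg_mul_Ioi (by linarith) hx).add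
    (integrableOn_rpow_mul_exp_neg_mul_Ioi (by linarith) hx)

theorem integral_rayEnvelope (hγ : -1 < γ) (hx : 0 < x) (k : ℕ) :
    ∫ y in Ioi (0 : ℝ), rayEnvelope γ x k y =
      Real.Gamma (k + 1) * x ^ (-k - 1 : ℝ) + Real.Gamma (γ + k + 1) * x ^ (-(γ + k) - 1) := by
  have := k.cast_nonneg (α := ℝ)
  simp only [rayEnvelope, add_mul]
  rw [integral_add (integrableOn_rpow_mul_exp_neg_mul_Ioi (by linarith) hx)
    (integrableOn_rpow_mul_exp_neg_mul_Ioi (by linarith) hx),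
    integral_rpow_mul_exp_neg_mul_Ioi_eq_Gamma (by linarith) hx,
    integral_rpow_mul_exp_neg_mul_Ioi_eq_Gamma (by linarith) hx]

theorem exists_norm_rayIntegrand_le (γ B : ℝ) :
    ∃ C, ∀ (x : ℝ) (k : ℕ), ∀ θ ∈ Icc 0 B, ∀ y ∈ Ioi (0 : ℝ),
      ‖rayIntegrand γ x k θ y‖ ≤ C * rayEnvelope γ x k y := by
  obtain ⟨C, hC⟩ := exists_norm_rpow_le_one_add_im_rpow γ B
  refine ⟨C, fun x k θ hθ y hy ↦ ?_⟩
  have hy' : 0 < y := hy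
  have hpow : ‖(θ + y * Complex.I : ℂ)‖ ^ γ ≤ C * (1 + y ^ γ) := by
    simpa using hC (θ + y * Complex.I) (by simpa using hθ) (by simpa using hy)
  have hfact : y ^ k / k.factorial ≤ y ^ k :=
    div_le_self (by positivity) (by exact_mod_cast k.factorial_pos)
  calc ‖rayIntegrand γ x k θ y‖
      = y ^ k / k.factorial * (‖(θ + y * Complex.I : ℂ)‖ ^ γ * Real.exp (-(x * y))) := by
        simp [rayIntegrand, norm_oscKernel, abs_of_pos hy']
    _ ≤ y ^ k * (C * (1 + y ^ γ) * Real.exp (-(x * y))) := by gcongr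
    _ = C * rayEnvelope γ x k y := by
        rw [rayEnvelope, Real.rpow_add hy', Real.rpow_natCast]; ring

theorem measurable_rayIntegrand (γ x : ℝ) (k : ℕ) (θ : ℝ) :
    Measurable (rayIntegrand γ x k θ) := by
  unfold rayIntegrand oscKernel
  fun_prop

theorem integrableOn_rayIntegrand (hγ : -1 < γ) (hx : 0 < x) (k : ℕ) {θ : ℝ} (hθ : 0 ≤ θ) :
    IntegrableOn (rayIntegrand γ x k θ) (Ioi 0) := by
  obtain ⟨C, hC⟩ := exists_norm_rayIntegrand_le γ θ
  refine ((integrableOn_rayEnvelope hγ hx k).const_mul C).mono'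
    (measurable_rayIntegrand γ x k θ).aestronglyMeasurable ?_
  filter_upwards [self_mem_ae_restrict measurableSet_Ioi] with y hy
  exact hC x k θ ⟨hθ, le_rfl⟩ y hy

theorem exists_norm_rayMoment_le (hγ : -1 < γ) (B : ℝ) :
    ∃ C, ∀ x > 0, ∀ k : ℕ, ∀ θ ∈ Icc 0 B, ‖rayMoment γ x k θ‖ ≤
      C * (Real.Gamma (k + 1) * x ^ (-k - 1 : ℝ) +
        Real.Gamma (γ + k + 1) * x ^ (-(γ + k) - 1)) := by
  obtain ⟨C, hC⟩ := exists_norm_rayIntegrand_le γ B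
  refine ⟨C, fun x hx k θ hθ ↦ ?_⟩
  rw [← integral_rayEnvelope hγ hx k, ← integral_const_mul]
  refine norm_integral_le_of_norm_le ((integrableOn_rayEnvelope hγ hx k).const_mul C) ?_
  filter_upwards [self_mem_ae_restrict measurableSet_Ioi] with y hy using hC x k θ hθ y hy

theorem continuousOn_rayMoment (hγ : -1 < γ) (hx : 0 < x) (k : ℕ) (B : ℝ) :
    ContinuousOn (rayMoment γ x k) (Icc 0 B) := by
  obtain ⟨C, hC⟩ := exists_norm_rayIntegrand_le γ B
  refine continuousOn_of_dominated (bound := fun y ↦ C * rayEnvelope γ x k y)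
    (fun θ _ ↦ (measurable_rayIntegrand γ x k θ).aestronglyMeasurable) (fun θ hθ ↦ ?_)
    ((integrableOn_rayEnvelope hγ hx k).const_mul C) ?_
  · filter_upwards [self_mem_ae_restrict measurableSet_Ioi] with y hy using hC x k θ hθ y hy
  · filter_upwards [self_mem_ae_restrict measurableSet_Ioi] with y hy θ _
    have hslit : (θ + y * Complex.I : ℂ) ∈ Complex.slitPlane := Or.inr (by simpa using hy.ne')
    have hline : ContinuousAt (fun θ : ℝ ↦ (θ + y * Complex.I : ℂ)) θ := by fun_prop
    exact (continuousAt_const.mul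
      ((hasDerivAt_oscKernel γ x hslit).continuousAt.comp_of_eq hline rfl)).continuousWithinAt

theorem hasDerivAt_rayIntegrand_left (γ x : ℝ) (k : ℕ) {θ : ℝ} (hθ : 0 < θ) (y : ℝ) :
    HasDerivAt (fun t ↦ rayIntegrand γ x k t y)
      (oscLogDeriv γ x (θ + y * Complex.I) * rayIntegrand γ x k θ y) θ := by
  have hslit : (θ + y * Complex.I : ℂ) ∈ Complex.slitPlane := Or.inl (by simpa using hθ)
  have hline : HasDerivAt (fun t : ℝ ↦ (t + y * Complex.I : ℂ)) 1 θ :=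
    Complex.ofRealCLM.hasDerivAt.add_const _
  refine (((hasDerivAt_oscKernel γ x hslit).comp_of_eq θ hline rfl).const_mul
    ((y : ℂ) ^ k / k.factorial)).congr_deriv ?_
  rw [rayIntegrand]
  ring

theorem hasDerivAt_rayIntegrand_zero_right (γ x : ℝ) {θ : ℝ} (hθ : 0 < θ) (y : ℝ) :
    HasDerivAt (rayIntegrand γ x 0 θ)
      (Complex.I * (oscLogDeriv γ x (θ + y * Complex.I) * rayIntegrand γ x 0 θ y)) y := by
  have hfun : rayIntegrand γ x 0 θ = fun t : ℝ ↦ oscKernel γ x (θ + t * Complex.I) := by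
    ext t
    simp [rayIntegrand]
  rw [hfun]
  exact hasDerivAt_oscKernel_vertical γ x hθ y

theorem hasDerivAt_rayIntegrand_succ_right (γ x : ℝ) (k : ℕ) {θ : ℝ} (hθ : 0 < θ) (y : ℝ) :
    HasDerivAt (rayIntegrand γ x (k + 1) θ)
      (rayIntegrand γ x k θ y + Complex.I *
        (oscLogDeriv γ x (θ + y * Complex.I) * rayIntegrand γ x (k + 1) θ y)) y := by
  have hpow : HasDerivAt (fun t : ℝ ↦ (t : ℂ) ^ (k + 1) / ((k + 1).factorial : ℂ))
      ((y : ℂ) ^ k / k.factorial) y := by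
    refine ((Complex.ofRealCLM.hasDerivAt.pow (k + 1)).div_const _).congr_deriv ?_
    have hk : (k + 1 : ℂ) ≠ 0 := k.cast_add_one_ne_zero
    simp [Nat.factorial_succ, mul_div_mul_left _ _ hk]
  refine (hpow.mul (hasDerivAt_oscKernel_vertical γ x hθ y)).congr_deriv ?_
  simp only [rayIntegrand]
  ring

theorem integrableOn_deriv_and_hasDerivAt_rayMoment (hγ : -1 < γ) (hx : 0 < x) (k : ℕ) {θ : ℝ}
    (hθ : 0 < θ) :
    IntegrableOn (fun y : ℝ ↦ oscLogDeriv γ x (θ + y * Complex.I) * rayIntegrand γ x k θ y)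
      (Ioi 0) ∧
    HasDerivAt (rayMoment γ x k)
      (∫ y in Ioi (0 : ℝ), oscLogDeriv γ x (θ + y * Complex.I) * rayIntegrand γ x k θ y) θ := by
  obtain ⟨C, hC⟩ := exists_norm_rayIntegrand_le γ (2 * θ)
  refine hasDerivAt_integral_of_dominated_loc_of_deriv_le (F := rayIntegrand γ x k)
    (F' := fun t y ↦ oscLogDeriv γ x (t + y * Complex.I) * rayIntegrand γ x k t y)
    (bound := fun y ↦ (|γ| / (θ / 2) + |x|) * (C * rayEnvelope γ x k y))
    (Ioo_mem_nhds (by linarith : θ / 2 < θ) (by linarith : θ < 2 * θ))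
    (.of_forall fun t ↦ (measurable_rayIntegrand γ x k t).aestronglyMeasurable)
    (integrableOn_rayIntegrand hγ hx k hθ.le) ?_ ?_
    (((integrableOn_rayEnvelope hγ hx k).const_mul C).const_mul _) ?_
  · have hmeas := measurable_rayIntegrand γ x k θ
    unfold oscLogDeriv
    exact Measurable.aestronglyMeasurable (by fun_prop)
  · filter_upwards [self_mem_ae_restrict measurableSet_Ioi] with y hy t ht
    have ht₀ : t ∈ Icc 0 (2 * θ) := ⟨by linarith [ht.1], ht.2.le⟩
    rw [norm_mul]
    gcongr
    · exact norm_oscLogDeriv_le γ x (half_pos hθ) (by simpa using ht.1.le)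
    · exact hC x k t ht₀ y hy
  · exact .of_forall fun y t ht ↦
      hasDerivAt_rayIntegrand_left γ x k (by linarith [ht.1]) y

theorem hasDerivAt_rayMoment_zero (hγ : -1 < γ) (hx : 0 < x) {θ : ℝ} (hθ : 0 < θ) :
    HasDerivAt (rayMoment γ x 0) (Complex.I * oscKernel γ x θ) θ := by
  obtain ⟨hint, hderiv⟩ := integrableOn_deriv_and_hasDerivAt_rayMoment hγ hx 0 hθ
  have hparts := integral_Ioi_deriv_eq_neg_of_integrableOn
    (fun y _ ↦ hasDerivAt_rayIntegrand_zero_right γ x hθ y)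
    (integrableOn_rayIntegrand hγ hx 0 hθ.le) (hint.const_mul Complex.I)
  refine hderiv.congr_deriv ?_
  have hbase : rayIntegrand γ x 0 θ 0 = oscKernel γ x θ := by simp [rayIntegrand]
  rw [integral_const_mul, hbase] at hparts
  linear_combination (-Complex.I) * hparts +
    (∫ y in Ioi (0 : ℝ), oscLogDeriv γ x (θ + y * Complex.I) * rayIntegrand γ x 0 θ y) *
      Complex.I_sq

theorem hasDerivAt_rayMoment_succ (hγ : -1 < γ) (hx : 0 < x) (k : ℕ) {θ : ℝ} (hθ : 0 < θ) :
    HasDerivAt (rayMoment γ x (k + 1)) (Complex.I * rayMoment γ x k θ) θ := by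
  obtain ⟨hint, hderiv⟩ := integrableOn_deriv_and_hasDerivAt_rayMoment hγ hx (k + 1) hθ
  have hk := integrableOn_rayIntegrand hγ hx k hθ.le
  have hparts := integral_Ioi_deriv_eq_neg_of_integrableOn
    (fun y _ ↦ hasDerivAt_rayIntegrand_succ_right γ x k hθ y)
    (integrableOn_rayIntegrand hγ hx (k + 1) hθ.le) (hk.add (hint.const_mul Complex.I))
  refine hderiv.congr_deriv ?_
  have hzero : rayIntegrand γ x (k + 1) θ 0 = 0 := by simp [rayIntegrand]
  rw [integral_add hk (hint.const_mul Complex.I), integral_const_mul, hzero] at hparts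
  rw [rayMoment]
  linear_combination (-Complex.I) * hparts +
    (∫ y in Ioi (0 : ℝ), oscLogDeriv γ x (θ + y * Complex.I) * rayIntegrand γ x (k + 1) θ y) *
      Complex.I_sq

theorem hasDerivAt_rayAntideriv (hγ : -1 < γ) (hx : 0 < x) (k : ℕ) {θ : ℝ} (hθ : 0 < θ) :
    HasDerivAt (rayAntideriv γ x (k + 1)) (rayAntideriv γ x k θ) θ := by
  cases k with
  | zero =>
    refine ((hasDerivAt_rayMoment_zero hγ hx hθ).const_mul ((-Complex.I) ^ 1)).congr_deriv ?_
    rw [rayAntideriv]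
    linear_combination (-oscKernel γ x θ) * Complex.I_sq
  | succ k =>
    refine ((hasDerivAt_rayMoment_succ hγ hx k hθ).const_mul
      ((-Complex.I) ^ (k + 2))).congr_deriv ?_
    rw [rayAntideriv, pow_succ]
    linear_combination (-(-Complex.I) ^ (k + 1) * rayMoment γ x k θ) * Complex.I_sq

theorem continuousOn_rayAntideriv_succ (hγ : -1 < γ) (hx : 0 < x) (k : ℕ) (B : ℝ) :
    ContinuousOn (rayAntideriv γ x (k + 1)) (Icc 0 B) :=
  continuousOn_const.mul (continuousOn_rayMoment hγ hx k B)

theorem exists_norm_rayAntideriv_succ_le (hγ : -1 < γ) (B : ℝ) (k : ℕ) {p : ℝ}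
    (hp : -(k + 1) ≤ p) (hp' : -(γ + k + 1) ≤ p) :
    ∃ C, ∀ x ≥ 1, ∀ θ ∈ Icc 0 B, ‖rayAntideriv γ x (k + 1) θ‖ ≤ C * x ^ p := by
  obtain ⟨C, hC⟩ := exists_norm_rayMoment_le hγ B
  refine ⟨|C| * (Real.Gamma (k + 1) + Real.Gamma (γ + k + 1)), fun x hx θ hθ ↦ ?_⟩
  have : 0 < Real.Gamma (k + 1) := Real.Gamma_pos_of_pos (by positivity)
  have : 0 < Real.Gamma (γ + k + 1) :=
    Real.Gamma_pos_of_pos (by linarith [k.cast_nonneg (α := ℝ)])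
  have hx₀ : 0 < x := by linarith
  calc ‖rayAntideriv γ x (k + 1) θ‖ = ‖rayMoment γ x k θ‖ := by simp [rayAntideriv]
    _ ≤ C * (Real.Gamma (k + 1) * x ^ (-k - 1 : ℝ) +
        Real.Gamma (γ + k + 1) * x ^ (-(γ + k) - 1)) := hC x hx₀ k θ hθ
    _ ≤ |C| * (Real.Gamma (k + 1) * x ^ p + Real.Gamma (γ + k + 1) * x ^ p) := by
        gcongr
        · exact le_abs_self C
        · linarith
        · linarith
    _ = _ := by ring

theorem rayIntegrand_at_zero (γ x : ℝ) (k : ℕ) {y : ℝ} (hy : 0 < y) :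
    rayIntegrand γ x k 0 y = Complex.I ^ (γ : ℂ) *
      ((y ^ (γ + k) * Real.exp (-(x * y)) / k.factorial : ℝ) : ℂ) := by
  have hexp : Complex.I * x * (y * Complex.I) = (-(x * y) : ℝ) := by
    push_cast
    linear_combination (x * y : ℂ) * Complex.I_sq
  rw [rayIntegrand, oscKernel, Complex.ofReal_zero, zero_add, ofReal_mul_cpow hy Complex.I_ne_zero,
    hexp, Real.rpow_add hy, Real.rpow_natCast]
  push_cast [Complex.ofReal_cpow hy.le]
  ring

theorem rayMoment_at_zero (hγ : -1 < γ) (hx : 0 < x) (k : ℕ) :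
    rayMoment γ x k 0 = Complex.I ^ (γ : ℂ) *
      (Real.Gamma (γ + k + 1) / k.factorial * x ^ (-γ - (k + 1)) : ℝ) := by
  rw [rayMoment, setIntegral_congr_fun measurableSet_Ioi fun y hy ↦ rayIntegrand_at_zero γ x k hy,
    integral_const_mul, integral_complex_ofReal, integral_div,
    integral_rpow_mul_exp_neg_mul_Ioi_eq_Gamma (by linarith [k.cast_nonneg (α := ℝ)]) hx,
    mul_div_right_comm]
  congr 4
  ring

/-- The value of `∫₀^∞ (θ ^ (γ + k) / k!) * exp (i θ) dθ` in the sense of Abel summation; it is the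
coefficient that the `k`-th Taylor term of an amplitude contributes to the expansion. -/
noncomputable def abelMoment (γ : ℝ) (k : ℕ) : ℂ :=
  Real.Gamma (γ + k + 1) / k.factorial *
    Complex.exp (Complex.I * Real.pi * (γ + (k + 1)) / 2)

theorem rayAntideriv_succ_at_zero (hγ : -1 < γ) (hx : 0 < x) (k : ℕ) :
    rayAntideriv γ x (k + 1) 0 =
      (-1) ^ (k + 1) * (abelMoment γ k * (x ^ (-γ - (k + 1)) : ℝ)) := by
  have hphase : Complex.I ^ (k + 1) * Complex.I ^ (γ : ℂ) =
      Complex.exp (Complex.I * Real.pi * (γ + (k + 1)) / 2) := by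
    rw [← Complex.cpow_natCast, ← Complex.cpow_add _ _ Complex.I_ne_zero,
      Complex.cpow_def_of_ne_zero Complex.I_ne_zero, Complex.log_I]
    push_cast
    ring_nf
  rw [rayAntideriv, rayMoment_at_zero hγ hx, abelMoment, ← hphase, neg_pow]
  push_cast
  ring

end Ray

section Expansion

variable {γ δ : ℝ}

theorem integral_mul_oscKernel_eq_sum_add_integral (hγ : -1 < γ) (hδ : 0 < δ) {u : ℝ → ℂ} {K : ℕ}
    (hu : ContDiffOn ℝ K u (Icc 0 δ))
    (hend : ∀ k < K, iteratedDerivWithin k u (Icc 0 δ) δ = 0) {x : ℝ} (hx : 0 < x) :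
    ∫ θ in (0 : ℝ)..δ, u θ * oscKernel γ x θ =
      ∑ k ∈ Finset.range K, iteratedDerivWithin k u (Icc 0 δ) 0 *
          (abelMoment γ k * (x ^ (-γ - (k + 1)) : ℝ)) +
        (-1) ^ K * ∫ θ in (0 : ℝ)..δ,
          iteratedDerivWithin K u (Icc 0 δ) θ * rayAntideriv γ x K θ := by
  have hparts := integral_mul_eq_sum_add_integral_of_hasDerivAt (a := 0) (b := δ)
    (g := fun k ↦ iteratedDerivWithin k u (Icc 0 δ)) (F := rayAntideriv γ x) K
    (fun k hk ↦ by
      rw [uIcc_of_le hδ.le]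
      exact hu.continuousOn_iteratedDerivWithin (by exact_mod_cast hk) (uniqueDiffOn_Icc hδ))
    (intervalIntegrable_oscKernel hγ x 0 δ)
    (fun k _ ↦ by
      rw [uIcc_of_le hδ.le]
      exact continuousOn_rayAntideriv_succ hγ hx k δ)
    (fun k hk t ht ↦ hasDerivAt_iteratedDerivWithin_Icc hu hk (by simpa [hδ.le] using ht))
    (fun k _ t ht ↦ hasDerivAt_rayAntideriv hγ hx k (by simpa [hδ.le] using ht.1))
  have hkernel : rayAntideriv γ x 0 = fun θ : ℝ ↦ oscKernel γ x θ := rfl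
  simp only [iteratedDerivWithin_zero, hkernel] at hparts
  rw [hparts]
  congr 1
  refine Finset.sum_congr rfl fun k hk ↦ ?_
  have hsign : (-1 : ℂ) ^ k * (-1) ^ k = 1 := by rw [← mul_pow]; simp
  rw [hend k (Finset.mem_range.1 hk), rayAntideriv_succ_at_zero hγ hx, pow_succ]
  linear_combination iteratedDerivWithin k u (Icc 0 δ) 0 *
    (abelMoment γ k * (x ^ (-γ - (k + 1)) : ℝ)) * hsign

theorem isBigO_integral_mul_rayAntideriv_succ (hγ : -1 < γ) (hδ : 0 ≤ δ) {v : ℝ → ℂ}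
    (hv : ContinuousOn v (Icc 0 δ)) (k : ℕ) {p : ℝ} (hp : -(k + 1) ≤ p)
    (hp' : -(γ + k + 1) ≤ p) :
    (fun x ↦ ∫ θ in (0 : ℝ)..δ, v θ * rayAntideriv γ x (k + 1) θ) =O[𝓟 (Ici 1)]
      fun x ↦ x ^ p := by
  obtain ⟨A, hA⟩ := isCompact_Icc.exists_bound_of_continuousOn hv
  obtain ⟨C, hC⟩ := exists_norm_rayAntideriv_succ_le hγ δ k hp hp'
  refine isBigO_principal.2 ⟨A * C * |δ - 0|, fun x hx ↦ ?_⟩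
  have hbound : ∀ θ ∈ Ι 0 δ, ‖v θ * rayAntideriv γ x (k + 1) θ‖ ≤ A * (C * x ^ p) := by
    intro θ hθ
    rw [uIoc_of_le hδ] at hθ
    have hθ' := Ioc_subset_Icc_self hθ
    rw [norm_mul]
    exact mul_le_mul (hA θ hθ') (hC x hx θ hθ') (norm_nonneg _) ((norm_nonneg _).trans (hA θ hθ'))
  refine (intervalIntegral.norm_integral_le_of_norm_le_const hbound).trans ?_
  rw [Real.norm_of_nonneg (Real.rpow_nonneg (zero_le_one.trans hx) p)]
  exact le_of_eq (by ring)

theorem isBigO_integral_mul_oscKernel_sub_sum (hγ : -1 < γ) (hδ : 0 < δ) {u : ℝ → ℂ}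
    {M K : ℕ} (hK : γ + M + 1 ≤ K) (hu : ContDiffOn ℝ K u (Icc 0 δ))
    (hend : ∀ k < K, iteratedDerivWithin k u (Icc 0 δ) δ = 0) :
    (fun x ↦ (∫ θ in (0 : ℝ)..δ, u θ * oscKernel γ x θ) -
      ∑ k ∈ Finset.range M, iteratedDerivWithin k u (Icc 0 δ) 0 *
        (abelMoment γ k * (x ^ (-γ - (k + 1)) : ℝ))) =O[𝓟 (Ici 1)]
      fun x ↦ x ^ (-γ - M - 1) := by
  have hMK : M < K := by
    have : (M : ℝ) < K := by linarith
    exact_mod_cast this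
  obtain ⟨N, rfl⟩ : ∃ N, K = N + 1 := ⟨K - 1, by lia⟩
  have htail : (fun x : ℝ ↦ ∑ k ∈ Finset.Ico M (N + 1), iteratedDerivWithin k u (Icc 0 δ) 0 *
      (abelMoment γ k * (x ^ (-γ - (k + 1)) : ℝ))) =O[𝓟 (Ici 1)] fun x ↦ x ^ (-γ - M - 1) := by
    refine IsBigO.fun_sum fun k hk ↦ ?_
    have hMk : (M : ℝ) ≤ k := by exact_mod_cast (Finset.mem_Ico.1 hk).1
    simp only [← mul_assoc]
    exact isBigO_const_mul_rpow_of_le _ (by linarith)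
  have hrem := isBigO_integral_mul_rayAntideriv_succ hγ hδ.le (p := -γ - M - 1)
    (hu.continuousOn_iteratedDerivWithin le_rfl (uniqueDiffOn_Icc hδ)) N
    (by push_cast at hK; linarith) (by
      have : (M : ℝ) ≤ N := by exact_mod_cast Nat.lt_succ_iff.1 hMK
      linarith)
  refine (htail.add (hrem.const_mul_left ((-1) ^ (N + 1)))).congr' ?_ .rfl
  filter_upwards [mem_principal_self (Ici (1 : ℝ))] with x hx
  rw [integral_mul_oscKernel_eq_sum_add_integral hγ hδ hu hend (zero_lt_one.trans_le hx),
    ← Finset.sum_range_add_sum_Ico _ hMK.le]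
  ring

end Expansion

theorem re_exp_mul_abelMoment (γ r : ℝ) (c : ℂ) (k : ℕ) :
    (Complex.exp (Complex.I * (γ * Real.pi / 2 : ℝ)) * (c * (abelMoment γ k * r))).re =
      Real.Gamma (γ + k + 1) / k.factorial *
        (c * Complex.exp (Complex.I * Real.pi * (2 * γ + (k + 1)) / 2)).re * r := by
  have hphase : Complex.exp (Complex.I * Real.pi * (2 * γ + (k + 1)) / 2) =
      Complex.exp (Complex.I * (γ * Real.pi / 2 : ℝ)) *
        Complex.exp (Complex.I * Real.pi * (γ + (k + 1)) / 2) := by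
    rw [← Complex.exp_add]
    push_cast
    ring_nf
  rw [mul_right_comm, ← Complex.re_ofReal_mul, hphase, abelMoment]
  congr 1
  push_cast
  ring

theorem sum_Icc_re_eq_re_exp_mul_sum (γ x : ℝ) (c : ℕ → ℂ) (M : ℕ) :
    ∑ m ∈ Finset.Icc 1 M, Real.Gamma (γ + m) / (m - 1).factorial *
        (c (m - 1) * Complex.exp (Complex.I * Real.pi * (2 * γ + m) / 2)).re * x ^ (-γ - m) =
      (Complex.exp (Complex.I * (γ * Real.pi / 2 : ℝ)) * ∑ k ∈ Finset.range M,
        c k * (abelMoment γ k * (x ^ (-γ - (k + 1)) : ℝ))).re := by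
  rw [← Finset.Ico_add_one_right_eq_Icc, Finset.sum_Ico_eq_sum_range, Nat.add_sub_cancel,
    Finset.mul_sum, Complex.re_sum]
  refine Finset.sum_congr rfl fun k _ ↦ ?_
  rw [Nat.add_sub_cancel_left, re_exp_mul_abelMoment, add_comm 1 k]
  push_cast
  rw [add_assoc γ]

theorem realPartOscillatoryExpansion_general {γ δ : ℝ} (hγ : -1 < γ) (hδ : 0 < δ) {u : ℝ → ℂ}
    {M K : ℕ} (hK : γ + M + 1 ≤ K) (hu : ContDiffOn ℝ K u (Icc 0 δ))
    (hend : ∀ m < K, iteratedDerivWithin m u (Icc 0 δ) δ = 0) {J : ℝ → ℂ}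
    (hJ : ∀ x, J x = ∫ θ in (0 : ℝ)..δ, (θ ^ γ : ℝ) * u θ * Complex.exp (Complex.I * x * θ)) :
    ∃ C : ℝ, 0 < C ∧ ∀ x : ℝ, 1 ≤ x →
      ‖Complex.exp (-(Complex.I * γ * Real.pi / 2)) * (starRingEnd ℂ) (J x) +
          Complex.exp (Complex.I * γ * Real.pi / 2) * J x -
          2 * ∑ m ∈ Finset.Icc 1 M,
            ((Real.Gamma (γ + m) / (m - 1).factorial *
                (iteratedDerivWithin (m - 1) u (Icc 0 δ) 0 *
                  Complex.exp (Complex.I * Real.pi * (2 * γ + m) / 2)).re *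
                x ^ (-γ - m) : ℝ) : ℂ)‖ ≤
        C * x ^ (-γ - M - 1) := by
  obtain ⟨C, hC, hO⟩ := (isBigO_integral_mul_oscKernel_sub_sum hγ hδ hK hu hend).exists_pos
  refine ⟨2 * C, by positivity, fun x hx ↦ ?_⟩
  have hJx : J x = ∫ θ in (0 : ℝ)..δ, u θ * oscKernel γ x θ := by
    rw [hJ]
    refine intervalIntegral.integral_congr fun θ hθ ↦ ?_
    rw [uIcc_of_le hδ.le] at hθ
    exact ofReal_rpow_mul_mul_exp_eq_mul_oscKernel γ x (u θ) hθ.1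
  have hphase : Complex.I * γ * Real.pi / 2 = Complex.I * (γ * Real.pi / 2 : ℝ) := by
    push_cast
    ring
  have hbound := isBigOWith_principal.1 hO x hx
  rw [← hJx, Real.norm_of_nonneg (Real.rpow_nonneg (zero_le_one.trans hx) _)] at hbound
  rw [← Complex.ofReal_sum, sum_Icc_re_eq_re_exp_mul_sum γ x
      (fun k ↦ iteratedDerivWithin k u (Icc 0 δ) 0), hphase, exp_neg_mul_conj_add_exp_mul,
    ← mul_sub, ← Complex.ofReal_sub, ← Complex.sub_re, ← mul_sub, norm_mul, Complex.norm_ofNat,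
    Complex.norm_real, mul_assoc]
  gcongr
  refine (Complex.abs_re_le_norm _).trans ?_
  rwa [norm_mul, Complex.norm_exp_I_mul_ofReal, one_mul]

/-- With `γ > 0`, `δ > 0`, `u : [0,δ] → ℂ` of class `C^∞` with all
derivatives vanishing at `δ`, and `J_n = ∫₀^δ θ^γ u(θ) e^(inθ) dθ`, the combination
`e^(-iγπ/2) conj(J_n) + e^(iγπ/2) J_n` admits the asymptotic expansion
`2 ∑_{m≥1} (Γ(γ+m)/(m-1)!) Re{u^(m-1)(0) e^(iπ(2γ+m)/2)} n^(-γ-m)` as `n → ∞`. -/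
theorem realPartOscillatoryExpansion (γ δ : ℝ) (hγ : 0 < γ) (hδ : 0 < δ) (u : ℝ → ℂ)
    (hu : ContDiffOn ℝ (⊤ : ℕ∞) u (Set.Icc 0 δ))
    (hend : ∀ m : ℕ, iteratedDerivWithin m u (Set.Icc 0 δ) δ = 0)
    (J : ℕ → ℂ)
    (hJ : ∀ n : ℕ,
      J n = ∫ θ in (0:ℝ)..δ, (θ ^ γ : ℝ) * u θ * Complex.exp (Complex.I * n * θ)) :
    ∀ M : ℕ, 1 ≤ M → ∃ C : ℝ, 0 < C ∧ ∀ n : ℕ, 1 ≤ n →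
      ‖Complex.exp (-(Complex.I * γ * Real.pi / 2)) * (starRingEnd ℂ) (J n) +
          Complex.exp (Complex.I * γ * Real.pi / 2) * J n -
          2 * ∑ m ∈ Finset.Icc 1 M,
            ((Real.Gamma (γ + m) / (m - 1).factorial *
                (iteratedDerivWithin (m - 1) u (Set.Icc 0 δ) 0 *
                  Complex.exp (Complex.I * Real.pi * (2 * γ + m) / 2)).re *
                (n : ℝ) ^ (-γ - m) : ℝ) : ℂ)‖ ≤
        C * (n : ℝ) ^ (-γ - M - 1) := by
  intro M _
  obtain ⟨C, hC, h⟩ := realPartOscillatoryExpansion_general (γ := γ) (M := M) (K := ⌈γ⌉₊ + M + 1)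
    (by linarith) hδ (by push_cast; gcongr; exact Nat.le_ceil γ) (hu.of_le (mod_cast le_top))
    (fun m _ ↦ hend m) (fun _ ↦ rfl)
  exact ⟨C, hC, fun n hn ↦ by simpa [hJ] using h n (mod_cast hn)⟩
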